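/- Let α ∈ (0, π/4) and let γ be a time optimal trajectory of (Σ)_S on [0,T] with γ(0) = (0,0,1), whose control is bang-bang with ordered switching times 0 < τ₁ < τ₂ < ... < τ_n < T (n ≥ 2), i.e. u is a.e. constant in {−1,1} on each of the intervals [0,τ₁], [τ₁,τ₂], ..., [τ_n,T] with alternating signs. Then all interior bang arcs have the same duration: for every 1 ≤ k ≤ n−1, τ_{k+1} − τ_k = v(τ₁), where v(s) = π + 2·arctan( sin s / (cos s + cot²α) ). -/

import Mathlib

open Real MeasureTheory intervalIntegral

/-- The drift vector field on the sphere: `F_S(y) = cos α·(−y₂, y₁, 0)`. -/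
noncomputable def FS (α : ℝ) (y : Fin 3 → ℝ) : Fin 3 → ℝ :=
  ![Real.cos α * (-(y 1)), Real.cos α * y 0, 0]

/-- The controlled vector field on the sphere: `G_S(y) = sin α·(0, −y₃, y₂)`. -/
noncomputable def GS (α : ℝ) (y : Fin 3 → ℝ) : Fin 3 → ℝ :=
  ![0, Real.sin α * (-(y 2)), Real.sin α * y 1]

/-- An admissible pair for `(Σ)_S` on `[a,b]`: a measurable control `u : [a,b] → [-1,1]`
together with an absolutely continuous curve `γ : [a,b] → S²` solving
`γ' = F_S(γ) + u·G_S(γ)` a.e. (expressed in integral form, componentwise). -/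
structure AdmissiblePairS (α a b : ℝ) (γ : ℝ → Fin 3 → ℝ) (u : ℝ → ℝ) : Prop where
  hab : a ≤ b
  humeas : Measurable u
  hubound : ∀ t ∈ Set.Icc a b, |u t| ≤ 1
  hsph : ∀ t ∈ Set.Icc a b, (γ t 0) ^ 2 + (γ t 1) ^ 2 + (γ t 2) ^ 2 = 1
  hcont : ContinuousOn γ (Set.Icc a b)
  hode : ∀ t ∈ Set.Icc a b, ∀ i,
    γ t i = γ a i + ∫ s in a..t, (FS α (γ s) i + u s * GS α (γ s) i)

/-- Time optimality for `(Σ)_S`. -/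
def TimeOptimalS (α a b : ℝ) (γ : ℝ → Fin 3 → ℝ) (u : ℝ → ℝ) : Prop :=
  AdmissiblePairS α a b γ u ∧
  ∀ a' b' γ' u', AdmissiblePairS α a' b' γ' u' →
    γ' a' = γ a → γ' b' = γ b → b - a ≤ b' - a'

/-- `t` is a switching time of the control `u : [a,b] → [-1,1]`. -/
def IsSwitching (a b : ℝ) (u : ℝ → ℝ) (t : ℝ) : Prop :=
  t ∈ Set.Icc a b ∧ ∀ ε > 0, ¬ ∃ c : ℝ, (c = 1 ∨ c = -1) ∧
    ∀ᵐ s ∂(volume.restrict (Set.Ioo (t - ε) (t + ε) ∩ Set.Icc a b)), u s = c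

/-! A bang arc with control `σ` is the rotation flow about the unit axis `controlAxis α σ`, so a
bang-bang trajectory is a product of rotations, and time optimality makes its durations minimize
the total time among all products of rotations about the same axes with the same end point. The
Lagrange multiplier rule in the durations then gives a nonzero momentum `m`, orthogonal to the
starting point and carried along by the rotations, whose component on the current axis is constant
in time. At a switching time the two axes thus have the same product with the momentum, which
forces its first coordinate to vanish. An interior arc rotates the momentum from the plane `y₁ = 0`
back to itself, hence by the reflection `y₂ ↦ -y₂`, so all interior arcs have the same angle. The
momentum at the first switching, and with it this angle, is determined by being orthogonal to the
image of the north pole under the first arc. -/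

open scoped Matrix

section AxisRotation

/-- Rotation of `ℝ³` by the angle `t` about the axis `a`, given by Rodrigues' formula; it is a
rotation when `a` is a unit vector. -/
noncomputable def axisRotation (a : Fin 3 → ℝ) (t : ℝ) : (Fin 3 → ℝ) →ₗ[ℝ] Fin 3 → ℝ :=
  cos t • LinearMap.id + sin t • crossProduct a + (1 - cos t) • (dotProductBilin ℝ ℝ a).smulRight a

lemma axisRotation_apply (a : Fin 3 → ℝ) (t : ℝ) (x : Fin 3 → ℝ) :
    axisRotation a t x = cos t • x + sin t • a ⨯₃ x + (1 - cos t) • (a ⬝ᵥ x) • a :=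
  rfl

@[simp]
lemma axisRotation_zero (a : Fin 3 → ℝ) : axisRotation a 0 = LinearMap.id := by
  simp [axisRotation]

lemma axisRotation_sub_two_pi (a : Fin 3 → ℝ) (t : ℝ) :
    axisRotation a (t - 2 * π) = axisRotation a t := by
  simp [axisRotation]

variable {a : Fin 3 → ℝ}

lemma dotProduct_axisRotation_axis (ha : a ⬝ᵥ a = 1) (t : ℝ) (x : Fin 3 → ℝ) :
    a ⬝ᵥ axisRotation a t x = a ⬝ᵥ x := by
  simp only [axisRotation_apply, dotProduct_add, dotProduct_smul, dot_self_cross, ha, smul_eq_mul]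
  ring

lemma hasDerivAt_axisRotation (ha : a ⬝ᵥ a = 1) (x : Fin 3 → ℝ) (t : ℝ) :
    HasDerivAt (fun s => axisRotation a s x) (a ⨯₃ axisRotation a t x) t := by
  have h := (((hasDerivAt_cos t).smul_const x).add ((hasDerivAt_sin t).smul_const (a ⨯₃ x))).add
    (((hasDerivAt_cos t).const_sub 1).smul_const ((a ⬝ᵥ x) • a))
  refine h.congr_deriv ?_
  simp only [axisRotation_apply, map_add, map_smul, cross_self, cross_cross_eq_smul_sub_smul', ha]
  module

lemma continuous_axisRotation (ha : a ⬝ᵥ a = 1) (x : Fin 3 → ℝ) :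
    Continuous fun t => axisRotation a t x :=
  continuous_iff_continuousAt.2 fun t => (hasDerivAt_axisRotation ha x t).continuousAt

lemma lipschitzWith_crossProduct (a : Fin 3 → ℝ) :
    LipschitzWith ‖(crossProduct a).toContinuousLinearMap‖₊ (crossProduct a) :=
  (crossProduct a).toContinuousLinearMap.lipschitz

lemma axisRotation_dotProduct (ha : a ⬝ᵥ a = 1) (t : ℝ) (x y : Fin 3 → ℝ) :
    axisRotation a t x ⬝ᵥ axisRotation a t y = x ⬝ᵥ y := by
  have hderiv (s : ℝ) :
      HasDerivAt (fun s => axisRotation a s x ⬝ᵥ axisRotation a s y) 0 s := by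
    have h := (dotProductBilin ℝ ℝ).toContinuousBilinearMap.hasDerivAt_of_bilinear
      (fun _ => hasDerivAt_axisRotation ha x s) (fun _ => hasDerivAt_axisRotation ha y s)
    refine h.congr_deriv ?_
    simp only [LinearMap.toContinuousBilinearMap_apply, dotProductBilin_apply_apply]
    rw [dotProduct_comm (a ⨯₃ _), triple_product_permutation _ a, triple_product_permutation _ a,
      ← dotProduct_add, cross_anticomm', dotProduct_zero]
  simpa using is_const_of_deriv_eq_zero (fun s => (hderiv s).differentiableAt)
    (fun s => (hderiv s).deriv) t 0

lemma axisRotation_cross (ha : a ⬝ᵥ a = 1) (t : ℝ) (x y : Fin 3 → ℝ) :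
    axisRotation a t x ⨯₃ axisRotation a t y = axisRotation a t (x ⨯₃ y) := by
  have hderiv (s : ℝ) : HasDerivAt (fun s => axisRotation a s x ⨯₃ axisRotation a s y)
      (a ⨯₃ (axisRotation a s x ⨯₃ axisRotation a s y)) s := by
    have h := crossProduct.toContinuousBilinearMap.hasDerivAt_of_bilinear
      (fun _ => hasDerivAt_axisRotation ha x s) (fun _ => hasDerivAt_axisRotation ha y s)
    refine h.congr_deriv ?_
    simp only [LinearMap.toContinuousBilinearMap_apply]
    rw [leibniz_cross a, add_comm]
  have huniq := ODE_solution_unique_univ (v := fun _ => crossProduct a) (s := fun _ => Set.univ)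
    (t₀ := 0) (fun _ => (lipschitzWith_crossProduct a).lipschitzOnWith)
    (fun s => ⟨hderiv s, trivial⟩)
    (fun s => ⟨hasDerivAt_axisRotation ha (x ⨯₃ y) s, trivial⟩) (by simp)
  exact congrFun huniq t

lemma eq_axisRotation_of_hasDerivWithinAt (ha : a ⬝ᵥ a = 1) {z : ℝ → Fin 3 → ℝ} {s t : ℝ}
    (hst : s ≤ t) (hz : ∀ r ∈ Set.Icc s t, HasDerivWithinAt z (a ⨯₃ z r) (Set.Icc s t) r) :
    z t = axisRotation a (t - s) (z s) := by
  have hrot (r : ℝ) : HasDerivAt (fun r => axisRotation a (r - s) (z s))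
      (a ⨯₃ axisRotation a (r - s) (z s)) r :=
    (hasDerivAt_axisRotation ha (z s) (r - s)).comp_sub_const r s
  refine ODE_solution_unique (v := fun _ => crossProduct a)
    (fun _ => lipschitzWith_crossProduct a) (HasDerivWithinAt.continuousOn hz) (fun r hr => ?_)
    (HasDerivAt.continuousOn fun r _ => hrot r) (fun r _ => (hrot r).hasDerivWithinAt) (by simp)
    (Set.right_mem_Icc.2 hst)
  exact (hz r (Set.Ico_subset_Icc_self hr)).mono_of_mem_nhdsWithin
    (Filter.mem_of_superset (Icc_mem_nhdsGE hr.2) (Set.Icc_subset_Icc_left hr.1))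

end AxisRotation

section RotationFlow

/-- Composition of the first `m` rotations, the `j`-th one being about the axis `ω j` by the angle
`d j`: the time-`d 0 + ⋯ + d (m - 1)` flow of a concatenation of arcs of durations `d`. -/
noncomputable def rotationFlow (ω : ℕ → Fin 3 → ℝ) (d : ℕ → ℝ) : ℕ → (Fin 3 → ℝ) →ₗ[ℝ] Fin 3 → ℝ
  | 0 => LinearMap.id
  | m + 1 => axisRotation (ω m) (d m) ∘ₗ rotationFlow ω d m

variable {ω : ℕ → Fin 3 → ℝ} {d d' : ℕ → ℝ}

lemma rotationFlow_succ (ω : ℕ → Fin 3 → ℝ) (d : ℕ → ℝ) (m : ℕ) (x : Fin 3 → ℝ) :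
    rotationFlow ω d (m + 1) x = axisRotation (ω m) (d m) (rotationFlow ω d m x) :=
  rfl

lemma rotationFlow_congr {m : ℕ}
    (h : ∀ j < m, axisRotation (ω j) (d j) = axisRotation (ω j) (d' j)) :
    rotationFlow ω d m = rotationFlow ω d' m := by
  induction m with
  | zero => rfl
  | succ m ih => rw [rotationFlow, rotationFlow, ih fun j hj => h j (by lia), h m (by lia)]

lemma rotationFlow_dotProduct (hω : ∀ j, ω j ⬝ᵥ ω j = 1) (d : ℕ → ℝ) (m : ℕ) (x y : Fin 3 → ℝ) :
    rotationFlow ω d m x ⬝ᵥ rotationFlow ω d m y = x ⬝ᵥ y := by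
  induction m with
  | zero => rfl
  | succ m ih => rw [rotationFlow_succ, rotationFlow_succ, axisRotation_dotProduct (hω m), ih]

lemma rotationFlow_cross (hω : ∀ j, ω j ⬝ᵥ ω j = 1) (d : ℕ → ℝ) (m : ℕ) (x y : Fin 3 → ℝ) :
    rotationFlow ω d m x ⨯₃ rotationFlow ω d m y = rotationFlow ω d m (x ⨯₃ y) := by
  induction m with
  | zero => rfl
  | succ m ih =>
    rw [rotationFlow_succ, rotationFlow_succ, axisRotation_cross (hω m), ih, rotationFlow_succ]

lemma rotationFlow_injective (hω : ∀ j, ω j ⬝ᵥ ω j = 1) (d : ℕ → ℝ) (m : ℕ) :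
    Function.Injective (rotationFlow ω d m) := by
  refine (injective_iff_map_eq_zero _).2 fun x hx => ?_
  rw [← dotProduct_self_eq_zero, ← rotationFlow_dotProduct hω d m, hx, dotProduct_zero]

lemma rotationFlow_surjective (hω : ∀ j, ω j ⬝ᵥ ω j = 1) (d : ℕ → ℝ) (m : ℕ) :
    Function.Surjective (rotationFlow ω d m) :=
  LinearMap.injective_iff_surjective.1 (rotationFlow_injective hω d m)

-- Both factors are carried through the arcs after the `j`-th one by the same isometry.
lemma rotationFlow_dotProduct_update (hω : ∀ j, ω j ⬝ᵥ ω j = 1) (d : ℕ → ℝ) {j m : ℕ} (hjm : j < m)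
    (s : ℝ) (p x : Fin 3 → ℝ) :
    rotationFlow ω d m p ⬝ᵥ rotationFlow ω (Function.update d j s) m x =
      rotationFlow ω d (j + 1) p ⬝ᵥ axisRotation (ω j) s (rotationFlow ω d j x) := by
  induction m, Nat.succ_le_iff.2 hjm using Nat.le_induction with
  | base =>
    rw [rotationFlow_succ _ (Function.update d j s), Function.update_self,
      rotationFlow_congr (d := Function.update d j s) (d' := d) (m := j)
        fun i hi => by rw [Function.update_of_ne hi.ne]]
  | succ m hm ih =>
    rw [rotationFlow_succ, rotationFlow_succ, Function.update_of_ne (by lia),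
      axisRotation_dotProduct (hω m), ih hm]

lemma hasDerivAt_rotationFlow_dotProduct_update (hω : ∀ j, ω j ⬝ᵥ ω j = 1) (d : ℕ → ℝ) {j m : ℕ}
    (hjm : j < m) (p x : Fin 3 → ℝ) :
    HasDerivAt
      (fun s => rotationFlow ω d m p ⬝ᵥ rotationFlow ω (Function.update d j s) m x)
      (ω j ⬝ᵥ rotationFlow ω d (j + 1) (x ⨯₃ p)) (d j) := by
  simp only [rotationFlow_dotProduct_update hω d hjm]
  have h := (dotProductBilin ℝ ℝ (rotationFlow ω d (j + 1) p)).toContinuousLinearMap.hasFDerivAt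
    |>.comp_hasDerivAt (d j) (hasDerivAt_axisRotation (hω j) (rotationFlow ω d j x) (d j))
  refine h.congr_deriv ?_
  rw [LinearMap.coe_toContinuousLinearMap', dotProductBilin_apply_apply, ← rotationFlow_succ,
    triple_product_permutation, rotationFlow_cross hω]

lemma contDiff_rotationFlow {F : Type*} [NormedAddCommGroup F] [NormedSpace ℝ F]
    {n : WithTop ℕ∞} {d : F → ℕ → ℝ} (hd : ∀ j, ContDiff ℝ n fun y => d y j)
    (ω : ℕ → Fin 3 → ℝ) (m : ℕ) (x : Fin 3 → ℝ) :
    ContDiff ℝ n fun y => rotationFlow ω (d y) m x := by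
  induction m with
  | zero => exact contDiff_const
  | succ m ih =>
    have hlin {G : Type} [NormedAddCommGroup G] [NormedSpace ℝ G] (L : (Fin 3 → ℝ) →ₗ[ℝ] G) :
        ContDiff ℝ n fun y => L (rotationFlow ω (d y) m x) :=
      L.toContinuousLinearMap.contDiff.comp ih
    have hcross := hlin (crossProduct (ω m))
    have hdot := hlin (dotProductBilin ℝ ℝ (ω m))
    simp only [rotationFlow_succ, axisRotation_apply]
    exact (((hd m).cos.smul ih).add ((hd m).sin.smul hcross)).add
      ((contDiff_const.sub (hd m).cos).smul (hdot.smul contDiff_const))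

end RotationFlow

section TimeMinimal

/-- The durations `d` of the first `N` arcs with axes `ω` minimize the total time among all
nonnegative durations leading from `x` to the same end point. -/
def IsTimeMinimal (ω : ℕ → Fin 3 → ℝ) (d : ℕ → ℝ) (N : ℕ) (x : Fin 3 → ℝ) : Prop :=
  IsMinOn (fun d' : ℕ → ℝ => ∑ j ∈ Finset.range N, d' j)
    {d' | (∀ j < N, 0 ≤ d' j) ∧ rotationFlow ω d' N x = rotationFlow ω d N x} d

/-- The end point reached from `x` when the first `N` durations `d` are replaced by `z.1`, scaled by
`z.2`. The scaling confines the multipliers of the Lagrange theorem to the directions tangent to the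
sphere; the normal direction would otherwise be a trivial multiplier. -/
noncomputable def scaledEndpoint (ω : ℕ → Fin 3 → ℝ) (d : ℕ → ℝ) (N : ℕ) (x : Fin 3 → ℝ)
    (z : (Fin N → ℝ) × ℝ) : Fin 3 → ℝ :=
  z.2 • rotationFlow ω (Function.extend Fin.val z.1 d) N x

lemma extend_val_of_not_lt {N : ℕ} (y : Fin N → ℝ) (d : ℕ → ℝ) {j : ℕ} (hj : ¬j < N) :
    Function.extend Fin.val y d j = d j :=
  Function.extend_apply' _ _ _ (by rintro ⟨i, rfl⟩; exact hj i.2)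

lemma extend_val_self (d : ℕ → ℝ) (N : ℕ) :
    Function.extend Fin.val (fun i : Fin N => d i) d = d := by
  ext j
  by_cases hj : j < N
  · exact Fin.val_injective.extend_apply _ _ ⟨j, hj⟩
  · exact extend_val_of_not_lt _ _ hj

lemma extend_val_add_smul_single (d : ℕ → ℝ) {N : ℕ} (j : Fin N) (s : ℝ) :
    Function.extend Fin.val ((fun i : Fin N => d i) + s • Pi.single j 1) d =
      Function.update d j (d j + s) := by
  ext k
  by_cases hk : k < N
  · rw [Fin.val_injective.extend_apply _ _ (⟨k, hk⟩ : Fin N)]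
    rcases eq_or_ne k j with rfl | hkj
    · simp
    · simp [hkj, Fin.ext_iff]
  · rw [extend_val_of_not_lt _ _ hk, Function.update_of_ne (by rintro rfl; exact hk j.2)]

lemma sum_range_extend_val {N : ℕ} (y : Fin N → ℝ) (d : ℕ → ℝ) :
    ∑ j ∈ Finset.range N, Function.extend Fin.val y d j = ∑ i, y i := by
  simp only [Finset.sum_range, Fin.val_injective.extend_apply]

variable {ω : ℕ → Fin 3 → ℝ} {d : ℕ → ℝ} {N : ℕ} {x : Fin 3 → ℝ}

lemma scaledEndpoint_self (ω : ℕ → Fin 3 → ℝ) (d : ℕ → ℝ) (N : ℕ) (x : Fin 3 → ℝ) :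
    scaledEndpoint ω d N x (fun i => d i, 1) = rotationFlow ω d N x := by
  rw [scaledEndpoint, extend_val_self, one_smul]

lemma contDiff_scaledEndpoint (ω : ℕ → Fin 3 → ℝ) (d : ℕ → ℝ) (N : ℕ) (x : Fin 3 → ℝ)
    {n : WithTop ℕ∞} : ContDiff ℝ n (scaledEndpoint ω d N x) := by
  refine contDiff_snd.smul (contDiff_rotationFlow (fun j => ?_) ω N x)
  by_cases hj : j < N
  · simp only [Fin.val_injective.extend_apply _ _ (⟨j, hj⟩ : Fin N)]
    fun_prop
  · simp only [extend_val_of_not_lt _ _ hj, contDiff_const]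

lemma hasLineDerivAt_scaledEndpoint_single (hω : ∀ j, ω j ⬝ᵥ ω j = 1) (p : Fin 3 → ℝ)
    (j : Fin N) :
    HasLineDerivAt ℝ (fun z => rotationFlow ω d N p ⬝ᵥ scaledEndpoint ω d N x z)
      (ω j ⬝ᵥ rotationFlow ω d (j + 1) (x ⨯₃ p)) (fun i => d i, 1) (Pi.single j 1, 0) := by
  have h := HasDerivAt.comp_const_add (d j) 0
    (by simpa using hasDerivAt_rotationFlow_dotProduct_update hω d j.2 p x)
  refine HasDerivAt.congr_of_eventuallyEq h (.of_forall fun s => ?_)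
  simp only [scaledEndpoint, Prod.smul_mk, Prod.mk_add_mk, extend_val_add_smul_single, smul_zero,
    add_zero, one_smul]

lemma hasLineDerivAt_scaledEndpoint_snd (hω : ∀ j, ω j ⬝ᵥ ω j = 1) (p : Fin 3 → ℝ) :
    HasLineDerivAt ℝ (fun z => rotationFlow ω d N p ⬝ᵥ scaledEndpoint ω d N x z)
      (p ⬝ᵥ x) (fun i => d i, 1) (0, 1) := by
  have h := ((hasDerivAt_id (0 : ℝ)).const_add 1).mul_const (p ⬝ᵥ x)
  rw [one_mul] at h
  refine HasDerivAt.congr_of_eventuallyEq h (.of_forall fun s => ?_)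
  simp only [scaledEndpoint, Prod.smul_mk, Prod.mk_add_mk, smul_zero, add_zero, extend_val_self,
    dotProduct_smul, rotationFlow_dotProduct hω, smul_eq_mul, mul_one, id]

lemma IsTimeMinimal.isLocalMinOn (h : IsTimeMinimal ω d N x) (hω : ∀ j, ω j ⬝ᵥ ω j = 1)
    (hd : ∀ j < N, 0 < d j) (hx : x ≠ 0) :
    IsLocalMinOn (fun z : (Fin N → ℝ) × ℝ => ∑ i, z.1 i)
      {z | scaledEndpoint ω d N x z = scaledEndpoint ω d N x (fun i => d i, 1)}
      (fun i => d i, 1) := by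
  have hpos : ∀ᶠ z : (Fin N → ℝ) × ℝ in nhds (fun i => d i, 1), (∀ i, 0 < z.1 i) ∧ 0 < z.2 := by
    refine .and (Filter.eventually_all.2 fun i => ?_) ?_
    · exact ((continuous_apply i).comp continuous_fst).continuousAt.eventually_const_lt (hd i i.2)
    · exact continuousAt_snd.eventually_const_lt one_pos
  filter_upwards [nhdsWithin_le_nhds hpos, self_mem_nhdsWithin] with z ⟨hy, hr⟩ hz
  rw [scaledEndpoint_self, scaledEndpoint] at hz
  have hnorm : z.2 ^ 2 * (x ⬝ᵥ x) = x ⬝ᵥ x := by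
    have := congrArg (fun w => w ⬝ᵥ w) hz
    simp only [smul_dotProduct, dotProduct_smul, rotationFlow_dotProduct hω, smul_eq_mul] at this
    linear_combination this
  have hr1 : z.2 = 1 :=
    (pow_eq_one_iff_of_nonneg hr.le two_ne_zero).1
      (mul_right_cancel₀ (mt dotProduct_self_eq_zero.1 hx) (hnorm.trans (one_mul _).symm))
  rw [hr1, one_smul] at hz
  have hmin : ∑ j ∈ Finset.range N, d j ≤
      ∑ j ∈ Finset.range N, Function.extend Fin.val z.1 d j := h ⟨fun j hj => ?_, hz⟩
  · rwa [sum_range_extend_val, Finset.sum_range] at hmin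
  · exact (Fin.val_injective.extend_apply z.1 d ⟨j, hj⟩).symm ▸ (hy _).le

lemma IsTimeMinimal.exists_multiplier (h : IsTimeMinimal ω d N x) (hω : ∀ j, ω j ⬝ᵥ ω j = 1)
    (hd : ∀ j < N, 0 < d j) (hx : x ≠ 0) :
    ∃ (p : Fin 3 → ℝ) (l : ℝ), (p, l) ≠ 0 ∧ ∀ v c,
      HasLineDerivAt ℝ (fun z => rotationFlow ω d N p ⬝ᵥ scaledEndpoint ω d N x z) c
        (fun i => d i, 1) v → c = l * ∑ i, v.1 i := by
  let totalTime : (Fin N → ℝ) × ℝ →L[ℝ] ℝ :=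
    (∑ i, ContinuousLinearMap.proj i) ∘L ContinuousLinearMap.fst ℝ (Fin N → ℝ) ℝ
  have htotal (z : (Fin N → ℝ) × ℝ) : totalTime z = ∑ i, z.1 i := by simp [totalTime]
  have hstrict := (contDiff_scaledEndpoint ω d N x).contDiffAt.hasStrictFDerivAt
    (x := ((fun i => d i, 1) : (Fin N → ℝ) × ℝ)) one_ne_zero
  have hmin := h.isLocalMinOn hω hd hx
  simp only [← htotal] at hmin
  obtain ⟨Λ, Λ₀, hne, hΛ⟩ := IsLocalExtrOn.exists_linear_map_of_hasStrictFDerivAt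
    (.inl hmin) hstrict totalTime.hasStrictFDerivAt
  obtain ⟨q, rfl⟩ := (dotProductEquiv ℝ (Fin 3)).surjective Λ
  obtain ⟨p, rfl⟩ := rotationFlow_surjective hω d N q
  refine ⟨p, -Λ₀, fun h0 => hne ?_, fun v c hc => ?_⟩
  · obtain ⟨rfl, hl⟩ := Prod.mk_eq_zero.1 h0
    simp [neg_eq_zero.1 hl]
  · have hc' := (dotProductEquiv ℝ (Fin 3) (rotationFlow ω d N p)).toContinuousLinearMap.hasFDerivAt
      |>.comp _ hstrict.hasFDerivAt |>.hasLineDerivAt v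
    have hv := hΛ v
    rw [htotal, smul_eq_mul] at hv
    have hcomp : c = dotProductEquiv ℝ (Fin 3) (rotationFlow ω d N p) (fderiv ℝ _ _ v) :=
      hc.unique hc'
    linear_combination hcomp + hv

/-- Pontryagin's maximum principle for a concatenation of arcs: `m = x ⨯₃ p` is the angular momentum
of the initial point and the initial covector. -/
theorem IsTimeMinimal.exists_momentum (h : IsTimeMinimal ω d N x) (hω : ∀ j, ω j ⬝ᵥ ω j = 1)
    (hd : ∀ j < N, 0 < d j) (hx : x ≠ 0) (hN : 0 < N) :
    ∃ m : Fin 3 → ℝ, m ≠ 0 ∧ x ⬝ᵥ m = 0 ∧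
      ∃ l : ℝ, ∀ j < N, ω j ⬝ᵥ rotationFlow ω d (j + 1) m = l := by
  obtain ⟨p, l, hpl, hderiv⟩ := h.exists_multiplier hω hd hx
  have hl : ∀ j < N, ω j ⬝ᵥ rotationFlow ω d (j + 1) (x ⨯₃ p) = l := fun j hj => by
    simpa using hderiv _ _ (hasLineDerivAt_scaledEndpoint_single hω p ⟨j, hj⟩)
  have hpx : p ⬝ᵥ x = 0 := by
    simpa using hderiv _ _ (hasLineDerivAt_scaledEndpoint_snd hω p)
  have hp : p ≠ 0 := by
    rintro rfl
    exact hpl (by simp [← hl 0 hN])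
  refine ⟨x ⨯₃ p, fun hm => ?_, dot_self_cross x p, l, hl⟩
  have hsq := cross_dot_cross x p x p
  rw [hm, zero_dotProduct, hpx, mul_zero, sub_zero, eq_comm, mul_eq_zero] at hsq
  exact hsq.elim (mt dotProduct_self_eq_zero.1 hx) (mt dotProduct_self_eq_zero.1 hp)

lemma IsTimeMinimal.duration_lt_two_pi (h : IsTimeMinimal ω d N x) (hd : ∀ j < N, 0 ≤ d j) {j : ℕ}
    (hj : j < N) : d j < 2 * π := by
  by_contra! hlong
  have hmem : Function.update d j (d j - 2 * π) ∈
      {d' | (∀ i < N, 0 ≤ d' i) ∧ rotationFlow ω d' N x = rotationFlow ω d N x} := by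
    refine ⟨fun i hi => ?_, ?_⟩
    · rcases eq_or_ne i j with rfl | hij
      · simpa using hlong
      · simpa [hij] using hd i hi
    · rw [rotationFlow_congr fun i _ => ?_]
      rcases eq_or_ne i j with rfl | hij
      · rw [Function.update_self, axisRotation_sub_two_pi]
      · rw [Function.update_of_ne hij]
  have hmin : ∑ i ∈ Finset.range N, d i ≤
      ∑ i ∈ Finset.range N, Function.update d j (d j - 2 * π) i := h hmem
  rw [Finset.sum_update_of_mem (Finset.mem_range.2 hj),
    ← Finset.add_sum_erase _ _ (Finset.mem_range.2 hj), Finset.sdiff_singleton_eq_erase] at hmin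
  linarith [pi_pos]

end TimeMinimal

section ControlAxis

/-- The angular velocity of the sphere under the constant control `σ`: the field
`F_S(y) + σ G_S(y)` is `controlAxis α σ ⨯₃ y`. -/
noncomputable def controlAxis (α σ : ℝ) : Fin 3 → ℝ :=
  ![σ * sin α, 0, cos α]

variable {α σ : ℝ}

lemma FS_add_mul_GS (α σ : ℝ) (y : Fin 3 → ℝ) (i : Fin 3) :
    FS α y i + σ * GS α y i = (controlAxis α σ ⨯₃ y) i := by
  rw [controlAxis, cross_apply]
  fin_cases i <;>
    simp only [FS, GS, Fin.zero_eta, Fin.mk_one, Fin.reduceFinMk, Matrix.cons_val] <;> ring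

lemma controlAxis_dotProduct_self (α : ℝ) (hσ : σ ^ 2 = 1) :
    controlAxis α σ ⬝ᵥ controlAxis α σ = 1 := by
  simp only [controlAxis, Matrix.vec3_dotProduct, Matrix.cons_val]
  linear_combination sin α ^ 2 * hσ + sin_sq_add_cos_sq α

end ControlAxis

section AdmissiblePairs

variable {α a b c s t σ : ℝ} {γ γ₁ γ₂ : ℝ → Fin 3 → ℝ} {u u₁ u₂ : ℝ → ℝ}

lemma eqOn_piecewise_Iic_Ici {E : Type*} {f g : ℝ → E} (hb : f b = g b) :
    Set.EqOn ((Set.Iic b).piecewise f g) g (Set.Ici b) := fun t ht => by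
  rcases (Set.mem_Ici.1 ht).eq_or_lt with rfl | hbt
  · rw [Set.piecewise_eq_of_mem _ _ _ Set.self_mem_Iic, hb]
  · exact Set.piecewise_eq_of_notMem _ _ _ (Set.notMem_Iic.2 hbt)

lemma continuous_FS (α : ℝ) : Continuous (FS α) := by
  unfold FS
  fun_prop

lemma continuous_GS (α : ℝ) : Continuous (GS α) := by
  unfold GS
  fun_prop

lemma admissiblePairS_axisRotation (α b : ℝ) {δ : ℝ} (hδ : 0 ≤ δ) (hσ : σ ^ 2 = 1) {y : Fin 3 → ℝ}
    (hy : y ⬝ᵥ y = 1) :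
    AdmissiblePairS α b (b + δ) (fun t => axisRotation (controlAxis α σ) (t - b) y)
      fun _ => σ := by
  have hω := controlAxis_dotProduct_self α hσ
  have hcont : Continuous fun t => axisRotation (controlAxis α σ) (t - b) y :=
    (continuous_axisRotation hω y).comp (continuous_sub_right b)
  have hderiv (t : ℝ) := (hasDerivAt_axisRotation hω y (t - b)).comp_sub_const t b
  refine ⟨by linarith, measurable_const, fun _ _ => sq_le_one_iff_abs_le_one σ |>.1 hσ.le,
    fun t _ => ?_, hcont.continuousOn, fun t _ i => ?_⟩
  · have h := axisRotation_dotProduct hω (t - b) y y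
    rw [hy, Matrix.vec3_dotProduct] at h
    simpa only [sq] using h
  · have hfield : Continuous fun s =>
        (controlAxis α σ ⨯₃ axisRotation (controlAxis α σ) (s - b) y) i :=
      (continuous_apply i).comp ((lipschitzWith_crossProduct _).continuous.comp hcont)
    simp only [FS_add_mul_GS]
    rw [integral_eq_sub_of_hasDerivAt (fun s _ => hasDerivAt_pi.1 (hderiv s) i)
      (hfield.intervalIntegrable b t)]
    ring

namespace AdmissiblePairS

lemma intervalIntegrable (h : AdmissiblePairS α a b γ u) (i : Fin 3) :
    IntervalIntegrable (fun s => FS α (γ s) i + u s * GS α (γ s) i) volume a b := by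
  have hF : ContinuousOn (fun s => FS α (γ s) i) (Set.Icc a b) :=
    ((continuous_apply i).comp (continuous_FS α)).comp_continuousOn h.hcont
  have hG : ContinuousOn (fun s => GS α (γ s) i) (Set.Icc a b) :=
    ((continuous_apply i).comp (continuous_GS α)).comp_continuousOn h.hcont
  have hu : IntervalIntegrable u volume a b := by
    rw [intervalIntegrable_iff_integrableOn_Icc_of_le h.hab]
    refine Measure.integrableOn_of_bounded (M := 1) (by simp) h.humeas.aestronglyMeasurable ?_
    exact ae_restrict_of_forall_mem measurableSet_Icc h.hubound
  exact (hF.intervalIntegrable_of_Icc h.hab).add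
    (hu.mul_continuousOn (by rwa [Set.uIcc_of_le h.hab]))

lemma mono (h : AdmissiblePairS α a b γ u) (has : a ≤ s) (hst : s ≤ t) (htb : t ≤ b) :
    AdmissiblePairS α s t γ u := by
  have hsub : Set.Icc s t ⊆ Set.Icc a b := Set.Icc_subset_Icc has htb
  refine ⟨hst, h.humeas, fun r hr => h.hubound r (hsub hr), fun r hr => h.hsph r (hsub hr),
    h.hcont.mono hsub, fun r hr i => ?_⟩
  have hint := h.intervalIntegrable i
  rw [h.hode r (hsub hr) i, h.hode s ⟨has, hst.trans htb⟩ i, add_assoc,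
    integral_add_adjacent_intervals]
  · exact hint.mono_set (Set.uIcc_subset_uIcc_left
      (Set.uIcc_of_le h.hab ▸ ⟨has, hst.trans htb⟩))
  · exact hint.mono_set (Set.uIcc_subset_uIcc
      (Set.uIcc_of_le h.hab ▸ ⟨has, hst.trans htb⟩) (Set.uIcc_of_le h.hab ▸ hsub hr))

lemma dotProduct_self (h : AdmissiblePairS α a b γ u) (ht : t ∈ Set.Icc a b) :
    γ t ⬝ᵥ γ t = 1 := by
  simpa only [Matrix.vec3_dotProduct, sq] using h.hsph t ht

lemma congr (h : AdmissiblePairS α a b γ₁ u₁) (hmeas : Measurable u₂)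
    (hγ : Set.EqOn γ₂ γ₁ (Set.Icc a b)) (hu : Set.EqOn u₂ u₁ (Set.Ioc a b)) (hua : |u₂ a| ≤ 1) :
    AdmissiblePairS α a b γ₂ u₂ := by
  refine ⟨h.hab, hmeas, fun t ht => ?_, fun t ht => ?_, h.hcont.congr hγ, fun t ht i => ?_⟩
  · rcases ht.1.eq_or_lt with rfl | hat
    · exact hua
    · rw [hu ⟨hat, ht.2⟩]
      exact h.hubound t ht
  · rw [hγ ht]
    exact h.hsph t ht
  · rw [hγ ht, hγ (Set.left_mem_Icc.2 h.hab), h.hode t ht i]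
    congr 1
    refine integral_congr_ae (.of_forall fun s hs => ?_)
    rw [Set.uIoc_of_le ht.1] at hs
    rw [hγ ⟨hs.1.le, hs.2.trans ht.2⟩, hu ⟨hs.1, hs.2.trans ht.2⟩]

lemma union (h₁ : AdmissiblePairS α a b γ u) (h₂ : AdmissiblePairS α b c γ u) :
    AdmissiblePairS α a c γ u := by
  have hunion : Set.Icc a c = Set.Icc a b ∪ Set.Icc b c :=
    (Set.Icc_union_Icc_eq_Icc h₁.hab h₂.hab).symm
  refine ⟨h₁.hab.trans h₂.hab, h₁.humeas, fun t ht => ?_, fun t ht => ?_, ?_, fun t ht i => ?_⟩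
  · exact (hunion ▸ ht).elim (h₁.hubound t) (h₂.hubound t)
  · exact (hunion ▸ ht).elim (h₁.hsph t) (h₂.hsph t)
  · exact hunion ▸ h₁.hcont.union_of_isClosed h₂.hcont isClosed_Icc isClosed_Icc
  · rcases le_total t b with htb | hbt
    · exact h₁.hode t ⟨ht.1, htb⟩ i
    · rw [← integral_add_adjacent_intervals (h₁.intervalIntegrable i)
        ((h₂.mono le_rfl hbt ht.2).intervalIntegrable i), ← add_assoc,
        ← h₁.hode b ⟨h₁.hab, le_rfl⟩ i]
      exact h₂.hode t ⟨hbt, ht.2⟩ i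

lemma concat (h₁ : AdmissiblePairS α a b γ₁ u₁) (h₂ : AdmissiblePairS α b c γ₂ u₂)
    (hb : γ₁ b = γ₂ b) :
    AdmissiblePairS α a c ((Set.Iic b).piecewise γ₁ γ₂) ((Set.Iic b).piecewise u₁ u₂) := by
  have hmeas : Measurable ((Set.Iic b).piecewise u₁ u₂) :=
    h₁.humeas.piecewise measurableSet_Iic h₂.humeas
  have hub : |(Set.Iic b).piecewise u₁ u₂ b| ≤ 1 := by
    rw [Set.piecewise_eq_of_mem _ _ _ Set.self_mem_Iic]
    exact h₁.hubound b (Set.right_mem_Icc.2 h₁.hab)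
  refine (h₁.congr hmeas (fun t ht => ?_) (fun t ht => ?_) ?_).union
    (h₂.congr hmeas ((eqOn_piecewise_Iic_Ici hb).mono Set.Icc_subset_Ici_self) (fun t ht => ?_) hub)
  · exact Set.piecewise_eq_of_mem _ _ _ ht.2
  · exact Set.piecewise_eq_of_mem _ _ _ ht.2
  · rw [Set.piecewise_eq_of_mem _ _ _ (Set.mem_Iic.2 h₁.hab)]
    exact h₁.hubound a (Set.left_mem_Icc.2 h₁.hab)
  · exact Set.piecewise_eq_of_notMem _ _ _ (Set.notMem_Iic.2 ht.1)

lemma eq_axisRotation_of_ae_eq (h : AdmissiblePairS α a b γ u) (hσ : σ ^ 2 = 1)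
    (hu : ∀ᵐ t ∂volume.restrict (Set.Icc a b), u t = σ) :
    γ b = axisRotation (controlAxis α σ) (b - a) (γ a) := by
  refine eq_axisRotation_of_hasDerivWithinAt (controlAxis_dotProduct_self α hσ) h.hab
    fun t ht => hasDerivWithinAt_pi.2 fun i => ?_
  have hfield : ContinuousOn (fun s => (controlAxis α σ ⨯₃ γ s) i) (Set.Icc a b) :=
    (continuous_apply i).comp_continuousOn
      ((lipschitzWith_crossProduct _).continuous.comp_continuousOn h.hcont)
  have hint (r : ℝ) (hr : r ∈ Set.Icc a b) :
      γ r i = γ a i + ∫ s in a..r, (controlAxis α σ ⨯₃ γ s) i := by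
    rw [h.hode r hr i]
    congr 1
    refine integral_congr_ae ?_
    filter_upwards [(ae_restrict_iff' measurableSet_Icc).1 hu] with s hs hsr
    rw [Set.uIoc_of_le hr.1] at hsr
    rw [hs ⟨hsr.1.le, hsr.2.trans hr.2⟩, FS_add_mul_GS]
  refine HasDerivWithinAt.congr_of_mem ?_ hint ht
  exact ODE.hasDerivWithinAt_picard_Icc (f := fun s (_ : ℝ) => (controlAxis α σ ⨯₃ γ s) i)
    (u := Set.univ) (α := fun _ => 0) (Set.left_mem_Icc.2 h.hab)
    (hfield.comp continuousOn_fst fun z hz => hz.1)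
    continuousOn_const (fun _ _ => trivial) (γ a i) ht

end AdmissiblePairS

variable {σ : ℕ → ℝ} {d τ : ℕ → ℝ} {N : ℕ} {x : Fin 3 → ℝ}

lemma exists_admissiblePairS_rotationFlow (α : ℝ) (hσ : ∀ j, σ j ^ 2 = 1) (hd : ∀ j < N, 0 ≤ d j)
    (hx : x ⬝ᵥ x = 1) :
    ∃ γ u, AdmissiblePairS α 0 (∑ j ∈ Finset.range N, d j) γ u ∧ γ 0 = x ∧
      γ (∑ j ∈ Finset.range N, d j) = rotationFlow (fun j => controlAxis α (σ j)) d N x := by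
  induction N with
  | zero =>
    have h := admissiblePairS_axisRotation α 0 le_rfl (hσ 0) hx
    rw [add_zero] at h
    exact ⟨_, _, by simpa only [Finset.sum_range_zero] using h, by simp, by simp [rotationFlow]⟩
  | succ N ih =>
    obtain ⟨γ, u, h, hstart, hend⟩ := ih fun j hj => hd j (by lia)
    have hy := h.dotProduct_self (Set.right_mem_Icc.2 h.hab)
    rw [Finset.sum_range_succ]
    set b := ∑ j ∈ Finset.range N, d j
    have harc := admissiblePairS_axisRotation α b (hd N (by lia)) (hσ N) hy
    have hjoin : γ b = axisRotation (controlAxis α (σ N)) (b - b) (γ b) := by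
      rw [sub_self, axisRotation_zero, LinearMap.id_apply]
    refine ⟨_, _, h.concat harc hjoin, ?_, ?_⟩
    · rw [Set.piecewise_eq_of_mem _ _ _ (Set.mem_Iic.2 h.hab), hstart]
    · rw [eqOn_piecewise_Iic_Ici hjoin harc.hab, add_sub_cancel_left, hend, rotationFlow_succ]

lemma AdmissiblePairS.eq_rotationFlow (h : AdmissiblePairS α (τ 0) (τ N) γ u)
    (hσ : ∀ j, σ j ^ 2 = 1) (hτ : ∀ j < N, τ j ≤ τ (j + 1))
    (hu : ∀ j < N, ∀ᵐ t ∂volume.restrict (Set.Icc (τ j) (τ (j + 1))), u t = σ j) :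
    γ (τ N) =
      rotationFlow (fun j => controlAxis α (σ j)) (fun j => τ (j + 1) - τ j) N (γ (τ 0)) := by
  induction N with
  | zero => rfl
  | succ N ih =>
    have hN : τ N ≤ τ (N + 1) := hτ N (by lia)
    have h0 : τ 0 ≤ τ N := by
      rw [← sub_nonneg, ← Finset.sum_range_sub]
      exact Finset.sum_nonneg fun j hj => sub_nonneg.2 (hτ j (by grind))
    rw [(h.mono h0 hN le_rfl).eq_axisRotation_of_ae_eq (hσ N) (hu N (by lia)),
      ih (h.mono le_rfl h0 hN) (fun j hj => hτ j (by lia)) (fun j hj => hu j (by lia)),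
      rotationFlow_succ]

lemma TimeOptimalS.isTimeMinimal (h : TimeOptimalS α (τ 0) (τ N) γ u)
    (hσ : ∀ j, σ j ^ 2 = 1) (hτ : ∀ j < N, τ j ≤ τ (j + 1))
    (hu : ∀ j < N, ∀ᵐ t ∂volume.restrict (Set.Icc (τ j) (τ (j + 1))), u t = σ j) :
    IsTimeMinimal (fun j => controlAxis α (σ j)) (fun j => τ (j + 1) - τ j) N (γ (τ 0)) := by
  rintro d ⟨hd, hflow⟩
  have hx := h.1.dotProduct_self (Set.left_mem_Icc.2 h.1.hab)
  obtain ⟨γ', u', h', hstart, hend⟩ := exists_admissiblePairS_rotationFlow α hσ hd hx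
  have hle := h.2 _ _ γ' u' h' hstart (by rw [hend, hflow, h.1.eq_rotationFlow hσ hτ hu])
  rw [sub_zero, ← Finset.sum_range_sub] at hle
  exact hle

end AdmissiblePairs

section Switching

variable {α σ σ' d t ε : ℝ} {x m : Fin 3 → ℝ}

lemma apply_zero_eq_zero_of_controlAxis_dotProduct_eq (hs : sin α ≠ 0) (hσ : σ ≠ σ')
    (h : controlAxis α σ ⬝ᵥ x = controlAxis α σ' ⬝ᵥ x) : x 0 = 0 := by
  simp only [controlAxis, Matrix.vec3_dotProduct, Matrix.cons_val] at h
  have hprod : (σ - σ') * sin α * x 0 = 0 := by linear_combination h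
  simpa [sub_ne_zero.2 hσ, hs] using hprod

lemma axisRotation_controlAxis (α σ t : ℝ) (x : Fin 3 → ℝ) :
    axisRotation (controlAxis α σ) t x = ![
      cos t * x 0 - sin t * cos α * x 1
        + (1 - cos t) * (σ * sin α * x 0 + cos α * x 2) * (σ * sin α),
      cos t * x 1 + sin t * (cos α * x 0 - σ * sin α * x 2),
      cos t * x 2 + sin t * (σ * sin α * x 1)
        + (1 - cos t) * (σ * sin α * x 0 + cos α * x 2) * cos α] := by
  rw [axisRotation_apply, cross_apply, Matrix.vec3_dotProduct]
  ext i
  simp only [controlAxis, Pi.add_apply, Pi.smul_apply, smul_eq_mul, Matrix.cons_val]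
  fin_cases i <;> simp only [Fin.zero_eta, Fin.mk_one, Fin.reduceFinMk, Matrix.cons_val] <;> ring

lemma mul_cos_half_eq_of_axisRotation_apply_zero (hc : cos α ≠ 0) (hd₀ : 0 < d) (hd : d < 2 * π)
    (hx : x 0 = 0) (hrot : axisRotation (controlAxis α σ) d x 0 = 0) :
    x 1 * cos (d / 2) = σ * x 2 * sin α * sin (d / 2) := by
  obtain ⟨e, rfl⟩ : ∃ e, d = 2 * e := ⟨d / 2, by ring⟩
  have hs : sin e ≠ 0 := (sin_pos_of_pos_of_lt_pi (by linarith) (by linarith)).ne'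
  simp only [axisRotation_controlAxis, Matrix.cons_val, hx, sin_two_mul, cos_two_mul] at hrot
  rw [mul_div_cancel_left₀ e two_ne_zero]
  refine mul_left_cancel₀ (mul_ne_zero (mul_ne_zero two_ne_zero hc) hs) ?_
  linear_combination -hrot - 2 * σ * sin α * cos α * x 2 * sin_sq_add_cos_sq e

lemma axisRotation_controlAxis_eq_of_apply_zero (hσ : σ ^ 2 = 1) (hc : cos α ≠ 0) (hd₀ : 0 < d)
    (hd : d < 2 * π) (hx : x 0 = 0) (hrot : axisRotation (controlAxis α σ) d x 0 = 0) :
    axisRotation (controlAxis α σ) d x = ![0, -x 1, x 2] := by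
  have hhalf := mul_cos_half_eq_of_axisRotation_apply_zero hc hd₀ hd hx hrot
  obtain ⟨e, rfl⟩ : ∃ e, d = 2 * e := ⟨d / 2, by ring⟩
  rw [mul_div_cancel_left₀ e two_ne_zero] at hhalf
  rw [axisRotation_controlAxis, Matrix.cons_val_zero] at hrot
  rw [axisRotation_controlAxis, hrot, hx, sin_two_mul, cos_two_mul]
  congr! 2
  · linear_combination 2 * cos e * hhalf
  · congr! 1
    linear_combination 2 * σ * sin α * sin e * hhalf + 2 * sin e ^ 2 * x 2 * sin α ^ 2 * hσ
      + 2 * x 2 * sin e ^ 2 * sin_sq_add_cos_sq α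
      + (2 * x 2 - 2 * x 2 * cos α ^ 2) * sin_sq_add_cos_sq e

lemma eq_pi_add_two_mul_arctan_div {b h : ℝ} (hb : b ≠ 0) (hd₀ : 0 < d) (hd : d < 2 * π)
    (hhalf : b * cos (d / 2) = -h * sin (d / 2)) : d = π + 2 * arctan (h / b) := by
  have hs : sin (d / 2) ≠ 0 := (sin_pos_of_pos_of_lt_pi (by linarith) (by linarith)).ne'
  have ht : tan (d / 2 - π / 2) = h / b := by
    rw [tan_eq_sin_div_cos, sin_sub_pi_div_two, cos_sub_pi_div_two, div_eq_div_iff hs hb]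
    linear_combination -hhalf
  rw [← ht, arctan_tan (by linarith) (by linarith)]
  ring

-- The north pole carried by the first arc stays orthogonal to the momentum.
lemma axisRotation_apply_two_mul_eq (hσ : σ ^ 2 = 1) (hm : ![0, 0, 1] ⬝ᵥ m = 0)
    (hrot : axisRotation (controlAxis α σ) t m 0 = 0) :
    axisRotation (controlAxis α σ) t m 2 * (cos α ^ 2 + sin α ^ 2 * cos t) =
      σ * axisRotation (controlAxis α σ) t m 1 * sin α * sin t := by
  have horth := axisRotation_dotProduct (controlAxis_dotProduct_self α hσ) t ![0, 0, 1] m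
  rw [hm, Matrix.vec3_dotProduct, hrot, axisRotation_controlAxis α σ t ![0, 0, 1]] at horth
  simp only [Matrix.cons_val] at horth
  linear_combination horth
    + axisRotation (controlAxis α σ) t m 2 * cos t * sin_sq_add_cos_sq α

lemma rotationFlow_controlAxis_succ_eq {σ d : ℕ → ℝ} {n : ℕ} (hσ : ∀ j, σ j ^ 2 = 1)
    (hc : cos α ≠ 0) (hd₀ : ∀ j < n, 0 < d j) (hd : ∀ j < n, d j < 2 * π)
    (hm : ∀ j < n, rotationFlow (fun j => controlAxis α (σ j)) d (j + 1) m 0 = 0) {j : ℕ}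
    (hj : j < n) :
    rotationFlow (fun j => controlAxis α (σ j)) d (j + 1) m =
      ![0, (-1) ^ j * axisRotation (controlAxis α (σ 0)) (d 0) m 1,
        axisRotation (controlAxis α (σ 0)) (d 0) m 2] := by
  induction j with
  | zero =>
    rw [← hm 0 hj]
    ext i
    fin_cases i <;> simp [rotationFlow]
  | succ j ih =>
    have hswitch := hm (j + 1) hj
    rw [rotationFlow_succ] at hswitch ⊢
    rw [axisRotation_controlAxis_eq_of_apply_zero (hσ _) hc (hd₀ _ hj) (hd _ hj)
      (hm j (by lia)) hswitch, ih (by lia)]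
    simp [pow_succ]

lemma axisRotation_apply_one_ne_zero (hσ : σ ^ 2 = 1) (hm : ![0, 0, 1] ⬝ᵥ m = 0) (hm₀ : m ≠ 0)
    (hden : cos α ^ 2 + sin α ^ 2 * cos t ≠ 0)
    (hrot : axisRotation (controlAxis α σ) t m 0 = 0) :
    axisRotation (controlAxis α σ) t m 1 ≠ 0 := by
  intro h₁
  have h₂ := axisRotation_apply_two_mul_eq hσ hm hrot
  rw [h₁, mul_zero, zero_mul, zero_mul, mul_eq_zero, or_iff_left hden] at h₂
  have hnorm := axisRotation_dotProduct (controlAxis_dotProduct_self α hσ) t m m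
  rw [Matrix.vec3_dotProduct, hrot, h₁, h₂] at hnorm
  exact hm₀ (dotProduct_self_eq_zero.1 (by linarith))

lemma neg_one_pow_mul_sq_eq_one (hε : ε ^ 2 = 1) (j : ℕ) : ((-1) ^ j * ε) ^ 2 = 1 := by
  rw [mul_pow, pow_right_comm, neg_one_sq, one_pow, one_mul, hε]

lemma cos_sq_add_sin_sq_mul_cos_eq (hs : sin α ≠ 0) (t : ℝ) :
    cos α ^ 2 + sin α ^ 2 * cos t = sin α ^ 2 * (cos t + (cos α / sin α) ^ 2) := by
  field_simp
  ring

lemma IsTimeMinimal.exists_momentum_apply_zero {σ d : ℕ → ℝ} {n : ℕ}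
    (h : IsTimeMinimal (fun j => controlAxis α (σ j)) d (n + 1) x) (hσ : ∀ j, σ j ^ 2 = 1)
    (hne : ∀ j < n, σ j ≠ σ (j + 1)) (hs : sin α ≠ 0) (hd : ∀ j < n + 1, 0 < d j) (hx : x ≠ 0) :
    ∃ m : Fin 3 → ℝ, m ≠ 0 ∧ x ⬝ᵥ m = 0 ∧
      ∀ j < n, rotationFlow (fun j => controlAxis α (σ j)) d (j + 1) m 0 = 0 := by
  obtain ⟨m, hm₀, hm, l, hl⟩ := h.exists_momentum
    (fun j => controlAxis_dotProduct_self α (hσ j)) hd hx n.succ_pos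
  refine ⟨m, hm₀, hm, fun j hj =>
    apply_zero_eq_zero_of_controlAxis_dotProduct_eq hs (hne j hj) ?_⟩
  rw [hl j (by lia), ← hl (j + 1) (by lia), rotationFlow_succ _ _ (j + 1),
    dotProduct_axisRotation_axis (controlAxis_dotProduct_self α (hσ _))]

theorem IsTimeMinimal.interior_duration_eq {d : ℕ → ℝ} {n : ℕ}
    (h : IsTimeMinimal (fun j => controlAxis α ((-1) ^ j * ε)) d (n + 1) ![0, 0, 1])
    (hε : ε ^ 2 = 1) (hs : sin α ≠ 0) (hc : cos α ≠ 0)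
    (hden : cos (d 0) + (cos α / sin α) ^ 2 ≠ 0) (hd : ∀ j < n + 1, 0 < d j) {j : ℕ}
    (hj : j + 1 < n) :
    d (j + 1) = π + 2 * arctan (sin (d 0) / (cos (d 0) + (cos α / sin α) ^ 2)) := by
  have hσ (j : ℕ) : ((-1) ^ j * ε) ^ 2 = 1 := neg_one_pow_mul_sq_eq_one hε j
  have hne (j : ℕ) : (-1) ^ j * ε ≠ (-1) ^ (j + 1) * ε := by
    rw [pow_succ, mul_neg_one, neg_mul, Ne, self_eq_neg]
    exact fun h₀ => by simpa [h₀] using hσ j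
  have hd_lt (j : ℕ) (hj : j < n + 1) : d j < 2 * π :=
    h.duration_lt_two_pi (fun j hj => (hd j hj).le) hj
  obtain ⟨m, hm₀, hm, hswitch⟩ :=
    h.exists_momentum_apply_zero hσ (fun j _ => hne j) hs hd (by simp)
  have hfirst : axisRotation (controlAxis α ((-1) ^ 0 * ε)) (d 0) m 0 = 0 := hswitch 0 (by lia)
  have hb := axisRotation_apply_one_ne_zero (hσ 0) hm hm₀
    (cos_sq_add_sin_sq_mul_cos_eq hs _ ▸ mul_ne_zero (pow_ne_zero 2 hs) hden) hfirst
  have hrel := axisRotation_apply_two_mul_eq (hσ 0) hm hfirst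
  have hhalf := mul_cos_half_eq_of_axisRotation_apply_zero hc (hd (j + 1) (by lia))
    (hd_lt (j + 1) (by lia)) (hswitch j (by lia)) (hswitch (j + 1) hj)
  rw [rotationFlow_controlAxis_succ_eq hσ hc (fun j hj => hd j (by lia))
    (fun j hj => hd_lt j (by lia)) hswitch (by lia)] at hhalf
  simp only [Matrix.cons_val] at hhalf
  rw [cos_sq_add_sin_sq_mul_cos_eq hs] at hrel
  set b := axisRotation (controlAxis α ((-1) ^ 0 * ε)) (d 0) m 1
  set c := axisRotation (controlAxis α ((-1) ^ 0 * ε)) (d 0) m 2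
  have hratio : ε * c * sin α / b = sin (d 0) / (cos (d 0) + (cos α / sin α) ^ 2) := by
    refine (div_eq_div_iff hb hden).2 (mul_left_cancel₀ hs ?_)
    linear_combination ε * hrel + sin α * b * sin (d 0) * hε
  rw [← hratio]
  refine eq_pi_add_two_mul_arctan_div hb (hd _ (by lia)) (hd_lt _ (by lia)) ?_
  refine mul_left_cancel₀ (pow_ne_zero j (neg_ne_zero.2 one_ne_zero : (-1 : ℝ) ≠ 0)) ?_
  linear_combination hhalf

end Switching

theorem interior_bang_durations_eq_general (α T : ℝ) (γ : ℝ → Fin 3 → ℝ) (u : ℝ → ℝ)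
    (hs : sin α ≠ 0) (hc : cos α ≠ 0) (hopt : TimeOptimalS α 0 T γ u)
    (h0 : γ 0 = ![0, 0, 1])
    (n : ℕ) (τ : ℕ → ℝ) (hτ0 : τ 0 = 0) (hτlast : τ (n + 1) = T)
    (hden : cos (τ 1) + (cos α / sin α) ^ 2 ≠ 0)
    (hmono : ∀ k ≤ n, τ k < τ (k + 1))
    (ε₀ : ℝ) (hε₀ : ε₀ = 1 ∨ ε₀ = -1)
    (hbang : ∀ k ≤ n,
      ∀ᵐ t ∂(volume.restrict (Set.Icc (τ k) (τ (k + 1)))), u t = (-1 : ℝ) ^ k * ε₀) :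
    ∀ k, 1 ≤ k → k ≤ n - 1 → τ (k + 1) - τ k =
      π + 2 * arctan (sin (τ 1) / (cos (τ 1) + (cos α / sin α) ^ 2)) := by
  intro k hk₁ hk
  obtain ⟨j, rfl⟩ := Nat.exists_eq_add_of_le' hk₁
  have hε : ε₀ ^ 2 = 1 := sq_eq_one_iff.2 hε₀
  rw [← hτ0, ← hτlast] at hopt
  have hmin := hopt.isTimeMinimal (neg_one_pow_mul_sq_eq_one hε)
    (fun k hk => (hmono k (by lia)).le) (fun k hk => hbang k (by lia))
  rw [hτ0, h0] at hmin
  have hfirst : τ (0 + 1) - τ 0 = τ 1 := by rw [hτ0, sub_zero]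
  simpa only [hfirst] using hmin.interior_duration_eq hε hs hc (by rwa [hfirst])
    (fun k hk => sub_pos.2 (hmono k (by lia))) (j := j) (by lia)

lemma sin_pos_and_sin_lt_cos {α : ℝ} (hα : α ∈ Set.Ioo 0 (π / 4)) :
    0 < sin α ∧ sin α < cos α := by
  obtain ⟨hα₀, hα₁⟩ := hα
  refine ⟨sin_pos_of_pos_of_lt_pi hα₀ (by linarith), ?_⟩
  rw [← cos_pi_div_two_sub]
  exact cos_lt_cos_of_nonneg_of_le_pi_div_two hα₀.le (by linarith) (by linarith)

/-- For a bang-bang time optimal trajectory of `(Σ)_S` starting at the north pole, with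
switching times `0 < τ₁ < ... < τ_n < T` (`n ≥ 2`) and alternating bang controls, all
interior bang arcs have duration `v(τ₁) = π + 2·arctan(sin τ₁/(cos τ₁ + cot²α))`. -/
theorem interior_bang_durations_eq (α T : ℝ) (γ : ℝ → Fin 3 → ℝ) (u : ℝ → ℝ)
    (hα : α ∈ Set.Ioo 0 (π / 4)) (hopt : TimeOptimalS α 0 T γ u)
    (h0 : γ 0 = ![0, 0, 1])
    (n : ℕ) (hn : 2 ≤ n) (τ : ℕ → ℝ) (hτ0 : τ 0 = 0) (hτlast : τ (n + 1) = T)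
    (hmono : ∀ k ≤ n, τ k < τ (k + 1))
    (ε₀ : ℝ) (hε₀ : ε₀ = 1 ∨ ε₀ = -1)
    (hbang : ∀ k ≤ n,
      ∀ᵐ t ∂(volume.restrict (Set.Icc (τ k) (τ (k + 1)))), u t = (-1 : ℝ) ^ k * ε₀) :
    ∀ k, 1 ≤ k → k ≤ n - 1 → τ (k + 1) - τ k =
      π + 2 * Real.arctan (Real.sin (τ 1) /
        (Real.cos (τ 1) + (Real.cos α / Real.sin α) ^ 2)) := by
  obtain ⟨hs, hlt⟩ := sin_pos_and_sin_lt_cos hα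
  have hcot : 1 < (cos α / sin α) ^ 2 := one_lt_pow₀ ((one_lt_div hs).2 hlt) two_ne_zero
  have hden : 0 < cos (τ 1) + (cos α / sin α) ^ 2 := by linarith [neg_one_le_cos (τ 1)]
  exact interior_bang_durations_eq_general α T γ u hs.ne' (hs.trans hlt).ne' hopt h0 n τ hτ0
    hτlast hden.ne' hmono ε₀ hε₀ hbang
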